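/- arXiv:1508.07110 — 2 statements merged into one kernel-verified Lean document; each statement's English description precedes it below -/
import Mathlib

section
/- Let X be a metric space, p ∈ X and 0 < r₀ ≤ r. Suppose H : B(p,r) × [0,1] → B(p,r) satisfies d(H(x,s),H(y,t)) ≤ A·d(x,y) + B·|s−t|, H(x,0) = x, H(x,1) ∈ B(p,r₀), the function t ↦ d(H(x,t),p) is non-increasing for each x, and H(y,t) = y for all y ∈ B(p,r₀) and t ∈ [0,1]. Suppose F : B(p,r₀) × [0,1] → B(p,r₀) satisfies d(F(x,s),F(y,t)) ≤ A'·d(x,y) + B'·|s−t|, F(y,0) = y, F(y,1) = p, and t ↦ d(F(y,t),p) is non-increasing for each y. Then the glued map G : B(p,r) × [0,1] → B(p,r) defined by G(x,t) = H(x,2t) for t ≤ 1/2 and G(x,t) = F(H(x,1), 2t−1) for t ≥ 1/2 is well-defined, satisfies d(G(x,s),G(y,t)) ≤ A''·d(x,y) + B''·|s−t| with A'' = max(A, A'·A) and B'' = max(2B, 2B'), G(x,0) = x, G(x,1) = p, and t ↦ d(G(x,t),p) is non-increasing for every x ∈ B(p,r); hence B(p,r) is strongly Lipschitz contractible to p.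 -/
/-!
The two formulas agree at time `1/2` because `H x 1` lies in the small ball, where `F · 0` is the
identity. On each half of `[0,1]` the claims are those for `H` and `F` after doubling the speed.
For `s ≤ 1/2 < t` the Lipschitz bound passes through the single intermediate point
`G y (1/2) = H y 1`: the first leg, from `H x (2s)`, costs `A·d(x,y) + 2B(1/2 - s)` and the second
leg, which keeps `y` fixed, costs `2B'(t - 1/2)`, so the spatial constants are never added.
Monotonicity across time `1/2` is likewise obtained through `H x 1`.
-/

open Metric Set

/-- gluing a Lipschitz homotopy `H` pushing `B(p,r)` into `B(p,r₀)`
with a strong Lipschitz contraction `F` of `B(p,r₀)` to `p` yields a strong Lipschitz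
contraction `G` of `B(p,r)` to `p` with constants `A'' = max(A, A'·A)` and
`B'' = max(2B, 2B')`. -/
theorem stmt_1 {X : Type*} [MetricSpace X] (p : X) (r₀ r : ℝ)
    (hr₀ : 0 < r₀) (hrr : r₀ ≤ r)
    (A B A' B' : ℝ) (hA : 0 ≤ A) (hB : 0 ≤ B) (hA' : 0 ≤ A') (hB' : 0 ≤ B')
    (H F : X → ℝ → X)
    (hHmaps : ∀ x ∈ closedBall p r, ∀ t ∈ Icc (0:ℝ) 1, H x t ∈ closedBall p r)
    (hHlip : ∀ x ∈ closedBall p r, ∀ y ∈ closedBall p r, ∀ s ∈ Icc (0:ℝ) 1,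
      ∀ t ∈ Icc (0:ℝ) 1, dist (H x s) (H y t) ≤ A * dist x y + B * |s - t|)
    (hH0 : ∀ x ∈ closedBall p r, H x 0 = x)
    (hH1 : ∀ x ∈ closedBall p r, H x 1 ∈ closedBall p r₀)
    (hHmono : ∀ x ∈ closedBall p r, ∀ s ∈ Icc (0:ℝ) 1, ∀ t ∈ Icc (0:ℝ) 1,
      s ≤ t → dist (H x t) p ≤ dist (H x s) p)
    (hHfix : ∀ y ∈ closedBall p r₀, ∀ t ∈ Icc (0:ℝ) 1, H y t = y)
    (hFmaps : ∀ y ∈ closedBall p r₀, ∀ t ∈ Icc (0:ℝ) 1, F y t ∈ closedBall p r₀)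
    (hFlip : ∀ x ∈ closedBall p r₀, ∀ y ∈ closedBall p r₀, ∀ s ∈ Icc (0:ℝ) 1,
      ∀ t ∈ Icc (0:ℝ) 1, dist (F x s) (F y t) ≤ A' * dist x y + B' * |s - t|)
    (hF0 : ∀ y ∈ closedBall p r₀, F y 0 = y)
    (hF1 : ∀ y ∈ closedBall p r₀, F y 1 = p)
    (hFmono : ∀ y ∈ closedBall p r₀, ∀ s ∈ Icc (0:ℝ) 1, ∀ t ∈ Icc (0:ℝ) 1,
      s ≤ t → dist (F y t) p ≤ dist (F y s) p) :
    ∀ G : X → ℝ → X,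
      (G = fun x t => if t ≤ 1/2 then H x (2*t) else F (H x 1) (2*t - 1)) →
      -- well-definedness: the two formulas agree at the overlap time t = 1/2
      (∀ x ∈ closedBall p r, H x (2 * (1/2 : ℝ)) = F (H x 1) (2 * (1/2 : ℝ) - 1)) ∧
      (∀ x ∈ closedBall p r, ∀ t ∈ Icc (0:ℝ) 1, G x t ∈ closedBall p r) ∧
      (∀ x ∈ closedBall p r, ∀ y ∈ closedBall p r, ∀ s ∈ Icc (0:ℝ) 1,
        ∀ t ∈ Icc (0:ℝ) 1, dist (G x s) (G y t) ≤
          max A (A' * A) * dist x y + max (2*B) (2*B') * |s - t|) ∧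
      (∀ x ∈ closedBall p r, G x 0 = x) ∧
      (∀ x ∈ closedBall p r, G x 1 = p) ∧
      (∀ x ∈ closedBall p r, ∀ s ∈ Icc (0:ℝ) 1, ∀ t ∈ Icc (0:ℝ) 1,
        s ≤ t → dist (G x t) p ≤ dist (G x s) p) := by
  intro G hG
  have hl : ∀ x t, t ≤ 1/2 → G x t = H x (2*t) := by
    intro x t ht; rw [hG]; exact if_pos ht
  have hu : ∀ x t, 1/2 < t → G x t = F (H x 1) (2*t - 1) := by
    intro x t ht; rw [hG]; exact if_neg (not_le.mpr ht)
  have z0 : (0:ℝ) ∈ Icc (0:ℝ) 1 := ⟨le_rfl, zero_le_one⟩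
  have z1 : (1:ℝ) ∈ Icc (0:ℝ) 1 := ⟨zero_le_one, le_rfl⟩
  have tl : ∀ t ∈ Icc (0:ℝ) 1, t ≤ 1/2 → 2*t ∈ Icc (0:ℝ) 1 := by
    intro t ht h; constructor <;> linarith [ht.1]
  have tu : ∀ t ∈ Icc (0:ℝ) 1, 1/2 < t → 2*t - 1 ∈ Icc (0:ℝ) 1 := by
    intro t ht h; constructor <;> linarith [ht.2]
  have mA : A ≤ max A (A' * A) := le_max_left _ _
  have mA' : A' * A ≤ max A (A' * A) := le_max_right _ _
  have mB : 2*B ≤ max (2*B) (2*B') := le_max_left _ _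
  have mB' : 2*B' ≤ max (2*B) (2*B') := le_max_right _ _
  have cross : ∀ x ∈ closedBall p r, ∀ y ∈ closedBall p r, ∀ s ∈ Icc (0:ℝ) 1,
      ∀ t ∈ Icc (0:ℝ) 1, s ≤ 1/2 → 1/2 < t → dist (G x s) (G y t) ≤
        max A (A' * A) * dist x y + max (2*B) (2*B') * |s - t| := by
    intro x hx y hy s hs t ht h1 h2
    rw [hl x s h1, hu y t h2]
    have e1 := hHlip x hx y hy _ (tl s hs h1) 1 z1
    have e2 := hFlip _ (hH1 y hy) _ (hH1 y hy) 0 z0 _ (tu t ht h2)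
    rw [hF0 _ (hH1 y hy), dist_self, mul_zero, zero_add, abs_of_nonpos (by linarith)] at e2
    rw [abs_of_nonpos (by linarith)] at e1
    rw [abs_of_nonpos (by linarith)]
    have e3 := dist_triangle (H x (2*s)) (H y 1) (F (H y 1) (2*t - 1))
    have m1 := mul_le_mul_of_nonneg_right mA (dist_nonneg (x := x) (y := y))
    have m2 := mul_le_mul_of_nonneg_right mB (by linarith : 0 ≤ 1/2 - s)
    have m3 := mul_le_mul_of_nonneg_right mB' (by linarith : 0 ≤ t - 1/2)
    linarith
  refine ⟨?_, ?_, ?_, ?_, ?_, ?_⟩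
  · intro x hx
    norm_num
    exact (hF0 _ (hH1 x hx)).symm
  · intro x hx t ht
    rcases le_or_gt t (1/2) with h | h
    · rw [hl x t h]
      exact hHmaps x hx _ (tl t ht h)
    · rw [hu x t h]
      exact closedBall_subset_closedBall hrr (hFmaps _ (hH1 x hx) _ (tu t ht h))
  · intro x hx y hy s hs t ht
    have hd := dist_nonneg (x := x) (y := y)
    have m1 := mul_le_mul_of_nonneg_right mA hd
    have m1' := mul_le_mul_of_nonneg_right mA' hd
    have m2 := mul_le_mul_of_nonneg_right mB (abs_nonneg (s - t))
    have m2' := mul_le_mul_of_nonneg_right mB' (abs_nonneg (s - t))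
    have ab : |2*s - 2*t| = 2 * |s - t| := by
      rw [← mul_sub, abs_mul, abs_two]
    rcases le_or_gt s (1/2) with h | h <;> rcases le_or_gt t (1/2) with h' | h'
    · rw [hl x s h, hl y t h']
      have e := hHlip x hx y hy _ (tl s hs h) _ (tl t ht h')
      rw [ab] at e
      linarith
    · exact cross x hx y hy s hs t ht h h'
    · rw [dist_comm, dist_comm x y, abs_sub_comm]
      exact cross y hy x hx t ht s hs h' h
    · rw [hu x s h, hu y t h']
      have e := hFlip _ (hH1 x hx) _ (hH1 y hy) _ (tu s hs h) _ (tu t ht h')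
      rw [sub_sub_sub_cancel_right, ab] at e
      have e2 := hHlip x hx y hy 1 z1 1 z1
      rw [sub_self, abs_zero, mul_zero, add_zero] at e2
      have e3 := mul_le_mul_of_nonneg_left e2 hA'
      linarith
  · intro x hx
    rw [hl x 0 (by norm_num), mul_zero, hH0 x hx]
  · intro x hx
    rw [hu x 1 (by norm_num), show (2*1 - 1 : ℝ) = 1 by norm_num, hF1 _ (hH1 x hx)]
  · intro x hx s hs t ht hst
    rcases le_or_gt s (1/2) with h | h <;> rcases le_or_gt t (1/2) with h' | h'
    · rw [hl x s h, hl x t h']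
      exact hHmono x hx _ (tl s hs h) _ (tl t ht h') (by linarith)
    · rw [hl x s h, hu x t h']
      have e1 := hHmono x hx _ (tl s hs h) 1 z1 (tl s hs h).2
      have e2 := hFmono _ (hH1 x hx) 0 z0 _ (tu t ht h') (tu t ht h').1
      rw [hF0 _ (hH1 x hx)] at e2
      exact e2.trans e1
    · linarith
    · rw [hu x s h, hu x t h']
      exact hFmono _ (hH1 x hx) _ (tu s hs h) _ (tu t ht h') (by linarith)
end

section
/- Let X be a topological space, F : X × ℝ → ℝ a continuous map, and a ∈ ℝ. Suppose that for every x ∈ X: the function t ↦ F(x,t) is strictly decreasing on [0,∞), F(x,0) ≥ a, and there exists t ≥ 0 with F(x,t) ≤ a. Then for every x ∈ X there is a unique τ(x) ≥ 0 with F(x,τ(x)) = a, τ(x) = min{t ≥ 0 : F(x,t) ≤ a}, and the function τ : X → ℝ is continuous. -/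
/-!
Existence of the hitting time is the intermediate value theorem on each curve, and strict
monotonicity gives uniqueness and minimality. For continuity, strict monotonicity turns, for a
fixed `b ≥ 0`, the condition `b < τ y` into `a < F y b` and `τ y < b` into `F y b < a`; both are
open conditions on `y` because `F · b` is continuous.
-/

open Set

/-- continuity (and existence/uniqueness) of the first hitting time of
the sublevel set `{F(x,·) ≤ a}` along a continuous, strictly decreasing flow. -/
theorem stmt_4 {X : Type*} [TopologicalSpace X] (F : X → ℝ → ℝ) (a : ℝ)
    (hF : Continuous fun q : X × ℝ => F q.1 q.2)
    (hanti : ∀ x, StrictAntiOn (F x) (Ici (0:ℝ)))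
    (h0 : ∀ x, a ≤ F x 0)
    (hhit : ∀ x, ∃ t : ℝ, 0 ≤ t ∧ F x t ≤ a) :
    ∃ τ : X → ℝ, Continuous τ ∧ ∀ x,
      (0 ≤ τ x ∧ F x (τ x) = a) ∧
      (∀ t : ℝ, 0 ≤ t → F x t = a → t = τ x) ∧
      IsLeast {t : ℝ | 0 ≤ t ∧ F x t ≤ a} (τ x) := by
  have hex : ∀ x, ∃ t : ℝ, 0 ≤ t ∧ F x t = a := fun x => by
    obtain ⟨T, hT, hTa⟩ := hhit x
    have hc : Continuous (F x) := hF.comp (Continuous.prodMk_right x)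
    obtain ⟨t, ht, hta⟩ := intermediate_value_Icc' hT hc.continuousOn ⟨hTa, h0 x⟩
    exact ⟨t, ht.1, hta⟩
  choose τ hτ0 hτ using hex
  have hslice : ∀ b : ℝ, Continuous fun y => F y b := fun b =>
    hF.comp (Continuous.prodMk_left b)
  refine ⟨τ, ?_, fun x => ⟨⟨hτ0 x, hτ x⟩, fun t ht hta => ?_, ⟨hτ0 x, (hτ x).le⟩, ?_⟩⟩
  · refine continuous_iff_continuousAt.2 fun x => tendsto_order.2 ⟨fun b hb => ?_, fun b hb => ?_⟩
    · rcases lt_or_ge b 0 with hneg | hb0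
      · exact Filter.Eventually.of_forall fun y => hneg.trans_le (hτ0 y)
      · have hxb : a < F x b := hτ x ▸ hanti x hb0 (hτ0 x) hb
        filter_upwards [(hslice b).continuousAt.eventually_const_lt hxb] with y hy
        exact ((hanti y).lt_iff_gt (hτ0 y) hb0).1 ((hτ y).symm ▸ hy)
    · have hb0 : 0 ≤ b := (hτ0 x).trans hb.le
      have hxb : F x b < a := hτ x ▸ hanti x (hτ0 x) hb0 hb
      filter_upwards [(hslice b).continuousAt.eventually_lt_const hxb] with y hy
      exact ((hanti y).lt_iff_gt hb0 (hτ0 y)).1 ((hτ y).symm ▸ hy)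
  · exact (hanti x).injOn ht (hτ0 x) (hta.trans (hτ x).symm)
  · rintro t ⟨ht, hta⟩
    exact ((hanti x).le_iff_ge ht (hτ0 x)).1 ((hτ x).symm ▸ hta)
end
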